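/- Let g : ℝ^n → ℝ be a convex polynomial function with g(0) = 0 and g(x) > 0 for all x ≠ 0, let A = {(x, z) ∈ ℝ^n × ℝ : z ≥ g(x)}, let a ∈ ℝ^n with a ≠ 0, and let B = {t·(a, 0) : t ∈ ℝ} ⊆ ℝ^{n+1}. Suppose the univariate polynomial t ↦ g(t a/‖a‖) has lowest-degree term c_0 t^d with c_0 > 0 and d a natural number with d ≥ 2. Let {u_k} ⊆ ℝ^{n+1} be the sequence of alternating projections u_{k+1} = P_B(P_A(u_k)) starting from some u_0, and assume u_k ≠ 0 for all k. Then u_k converges to 0 and lim_{k→∞} ((2d−2) d c_0^2)^{1/(2d−2)} · k^{1/(2d−2)} · ‖u_k‖ = 1; in particular ‖u_k‖ = Θ(k^{−1/(2d−2)}) as k → ∞. -/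

import Mathlib

open Filter

/-- `u` is the metric projection of `p` onto `S`. -/
def IsMetricProj {E : Type*} [NormedAddCommGroup E] (S : Set E) (p u : E) : Prop :=
  u ∈ S ∧ ∀ s ∈ S, ‖u - p‖ ≤ ‖s - p‖


lemma aux_incr (t : ℕ → ℝ) (m : ℕ) (hm : 1 ≤ m) (q : ℝ) (h0 : Tendsto t atTop (nhds 0)) (hne : ∀ k, t k ≠ 0)
    (h : Tendsto (fun k => (t k - t (k+1)) / t k ^ (m+1)) atTop (nhds q)) :
    Tendsto (fun k => (t (k+1) ^ m)⁻¹ - (t k ^ m)⁻¹) atTop (nhds (q * m)) := by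
  set Q : ℕ → ℝ := fun k => (t k - t (k+1)) / t k ^ (m+1) with hQ
  have hh : Tendsto (fun k => 1 - Q k * t k ^ m) atTop (nhds 1) := by
    have := (h.mul (h0.pow m)).const_sub 1
    simpa [show m ≠ 0 by omega] using this
  have hs : Tendsto (fun k => Q k * (∑ i ∈ Finset.range m, (1 - Q k * t k ^ m) ^ i) / (1 - Q k * t k ^ m) ^ m)
      atTop (nhds (q * (∑ i ∈ Finset.range m, (1:ℝ) ^ i) / 1 ^ m)) := by
    refine (h.mul (tendsto_finsetSum _ fun i _ => hh.pow i)).div (hh.pow m) (by simp)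
  simp only [one_pow, Finset.sum_const, Finset.card_range, nsmul_eq_mul, mul_one, div_one] at hs
  refine hs.congr fun k => ?_
  have e : t (k+1) = t k * (1 - Q k * t k ^ m) := by
    have := hne k
    simp only [hQ]; field_simp; ring
  have hx : 1 - Q k * t k ^ m ≠ 0 := by
    intro h'; rw [h', mul_zero] at e; exact hne _ e
  have g := mul_neg_geom_sum (1 - Q k * t k ^ m) m
  rw [e, mul_pow]
  have := hne k
  set r := 1 - Q k * t k ^ m with hr
  have e2 : (1 - r) = Q k * t k ^ m := by rw [hr]; ring
  rw [e2] at g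
  field_simp
  linarith

lemma aux_final (s : ℕ → ℝ) (m : ℕ) (hm : 1 ≤ m) (L : ℝ) (hL : 0 < L) (hs : ∀ k, 0 < s k)
    (h : Tendsto (fun k => (s (k+1) ^ m)⁻¹ - (s k ^ m)⁻¹) atTop (nhds L)) :
    Tendsto (fun k : ℕ => L ^ (1 / (m:ℝ)) * (k:ℝ) ^ (1 / (m:ℝ)) * s k) atTop (nhds 1) := by
  have hc := h.cesaro
  simp only [Finset.sum_range_sub (fun k => (s k ^ m)⁻¹)] at hc
  have hc2 : Tendsto (fun n : ℕ => (n:ℝ)⁻¹ * (s n ^ m)⁻¹) atTop (nhds L) := by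
    have := hc.add ((tendsto_inv_atTop_nhds_zero_nat (𝕜 := ℝ)).mul_const ((s 0 ^ m)⁻¹))
    simp only [zero_mul, add_zero] at this
    refine this.congr fun n => by ring
  have h3 := ((hc2.inv₀ hL.ne').const_mul L).rpow_const (p := 1 / (m:ℝ)) (Or.inl (by field_simp; norm_num))
  rw [mul_inv_cancel₀ hL.ne', Real.one_rpow] at h3
  refine h3.congr fun k => ?_
  have e : L * ((k:ℝ)⁻¹ * (s k ^ m)⁻¹)⁻¹ = L * k * s k ^ m := by
    rw [mul_inv, inv_inv, inv_inv, mul_assoc]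
  rw [e, Real.mul_rpow (by positivity) (by have := hs k; positivity), Real.mul_rpow hL.le (by positivity)]
  congr 1
  rw [one_div]
  exact Real.pow_rpow_inv_natCast (hs k).le (by omega)

lemma aux_theta (s : ℕ → ℝ) (p C : ℝ) (hC : 0 < C)
    (h : Tendsto (fun k : ℕ => C * (k:ℝ) ^ p * s k) atTop (nhds 1)) :
    ∃ C₁ C₂ : ℝ, ∃ K : ℕ, 0 < C₁ ∧ C₁ ≤ C₂ ∧ ∀ k ≥ K,
      C₁ * (k : ℝ) ^ (-p) ≤ s k ∧ s k ≤ C₂ * (k : ℝ) ^ (-p) := by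
  have h1 := (h.eventually (lt_mem_nhds (show (1/2:ℝ) < 1 by norm_num))).and
    (h.eventually (gt_mem_nhds (show (1:ℝ) < 2 by norm_num)))
  obtain ⟨K, hK⟩ := eventually_atTop.1 h1
  refine ⟨1/2/C, 2/C, max K 1, by positivity, by gcongr; norm_num, fun k hk => ?_⟩
  obtain ⟨a, b⟩ := hK k (le_trans (le_max_left _ _) hk)
  have hk1 : 0 < (k:ℝ) := by exact_mod_cast (le_trans (le_max_right _ _) hk)
  rw [Real.rpow_neg hk1.le]
  have hp := Real.rpow_pos_of_pos hk1 p
  set y := (k:ℝ) ^ p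
  constructor
  · rw [← div_eq_mul_inv, div_div, div_le_iff₀ (by positivity)]; nlinarith
  · rw [← div_eq_mul_inv, div_div, le_div_iff₀ (by positivity)]; nlinarith

lemma aux_dvd (q : Polynomial ℝ) (m : ℕ) (h : (fun t : ℝ => q.eval t) =O[nhds 0] fun t : ℝ => t ^ m) :
    Polynomial.X ^ m ∣ q := by
  induction m generalizing q with
  | zero => simp
  | succ m ih =>
    have h0 : q.eval 0 = 0 := by
      have := h.eq_zero_imp
      have := this.self_of_nhds
      simpa using this
    obtain ⟨r, rfl⟩ : Polynomial.X ∣ q := by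
      rw [Polynomial.X_dvd_iff, Polynomial.coeff_zero_eq_eval_zero, h0]
    rw [pow_succ']
    refine mul_dvd_mul_left _ (ih r ?_)
    have hw : (fun t : ℝ => r.eval t) =O[nhdsWithin 0 {0}ᶜ] fun t : ℝ => t ^ m := by
      have h' := h.mono (nhdsWithin_le_nhds (s := {0}ᶜ))
      have h2 := (Asymptotics.isBigO_refl (fun t : ℝ => t⁻¹) (nhdsWithin 0 {0}ᶜ)).mul h'
      refine (h2.congr' ?_ ?_)
      · filter_upwards [self_mem_nhdsWithin] with t ht
        have : t ≠ 0 := ht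
        simp; field_simp
      · filter_upwards [self_mem_nhdsWithin] with t ht
        have : t ≠ 0 := ht
        field_simp
        ring
    obtain ⟨C, hC⟩ := hw.bound
    refine Asymptotics.IsBigO.of_bound C ?_
    have hcl : ∀ᶠ t in nhdsWithin (0:ℝ) {0}ᶜ, ‖r.eval t‖ - C * ‖t ^ m‖ ≤ 0 := hC.mono fun t ht => by linarith
    have hz : ‖r.eval 0‖ - C * ‖(0:ℝ) ^ m‖ ≤ 0 := by
      refine le_of_tendsto (f := fun t : ℝ => ‖r.eval t‖ - C * ‖t ^ m‖) (x := nhdsWithin (0:ℝ) {0}ᶜ) ?_ hcl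
      have : Continuous fun t : ℝ => ‖r.eval t‖ - C * ‖t ^ m‖ := by fun_prop
      exact this.continuousAt.tendsto.mono_left nhdsWithin_le_nhds
    rw [eventually_nhdsWithin_iff] at hC
    filter_upwards [hC] with t ht
    by_cases h : t = 0
    · subst h; linarith
    · exact ht h

lemma aux_poly (p : Polynomial ℝ) (c : ℝ) (d : ℕ) (hd : 2 ≤ d)
    (h : (fun t : ℝ => p.eval t - c * t ^ d) =O[nhds 0] fun t : ℝ => t ^ (d+1)) (t : ℕ → ℝ)
    (h0 : Tendsto t atTop (nhds 0)) (hne : ∀ k, t k ≠ 0) :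
    Tendsto (fun k => p.eval (t k) / t k ^ d) atTop (nhds c) ∧
    Tendsto (fun k => p.derivative.eval (t k) / t k ^ (d-1)) atTop (nhds (d * c)) := by
  obtain ⟨r, hr⟩ := aux_dvd (p - Polynomial.C c * Polynomial.X ^ d) (d+1) (by simpa using h)
  have hp : p = Polynomial.C c * Polynomial.X ^ d + Polynomial.X ^ (d+1) * r := by rw [← hr]; ring
  obtain ⟨e, rfl⟩ : ∃ e, d = e + 1 := ⟨d-1, by omega⟩
  have c1 : ∀ q : Polynomial ℝ, Tendsto (fun k => q.eval (t k)) atTop (nhds (q.eval 0)) := fun q =>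
    (q.continuous.tendsto 0).comp h0
  constructor
  · have := c1 (Polynomial.C c + Polynomial.X * r)
    simp only [Polynomial.eval_add, Polynomial.eval_C, Polynomial.eval_mul, Polynomial.eval_X, zero_mul, add_zero] at this
    refine this.congr fun k => ?_
    have := hne k
    rw [hp]; simp; field_simp; ring
  · have := c1 (Polynomial.C ((e+1:ℕ) * c) + Polynomial.X * (((e+2:ℕ):Polynomial ℝ) * r + Polynomial.X * r.derivative))
    simp only [Polynomial.eval_add, Polynomial.eval_C, Polynomial.eval_mul, Polynomial.eval_X, zero_mul, add_zero] at this
    refine this.congr fun k => ?_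
    have := hne k
    rw [hp]; simp; field_simp; ring

lemma aux_crit {F : Type*} [NormedAddCommGroup F] [InnerProductSpace ℝ F] (G : F → ℝ)
    (hG : Differentiable ℝ G) (v x e : F)
    (hmin : ∀ y, ‖x - v‖ ^ 2 + G x ^ 2 ≤ ‖y - v‖ ^ 2 + G y ^ 2) :
    inner ℝ (x - v) e = - (G x * fderiv ℝ G x e) := by
  have hm : IsLocalMin (fun y => ‖y - v‖ ^ 2 + G y ^ 2) x := Eventually.of_forall hmin
  have hd : HasFDerivAt (fun y => ‖y - v‖ ^ 2 + G y ^ 2) _ x :=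
    (((hasFDerivAt_id x).sub_const v).norm_sq).add ((hG x).hasFDerivAt.pow 2)
  have := congrArg (fun f => f e) (hm.hasFDerivAt_eq_zero hd)
  simp at this
  rw [inner_sub_left]
  linarith

lemma aux_core {F : Type*} [NormedAddCommGroup F] [InnerProductSpace ℝ F] (G : F → ℝ)
    (hG : ContDiff ℝ 2 G) (hpos : ∀ x, 0 ≤ G x) (hG0 : G 0 = 0) (e : F) (he : ‖e‖ = 1)
    (p : Polynomial ℝ) (hp : ∀ t : ℝ, G (t • e) = p.eval t) (c : ℝ) (d : ℕ) (hd : 2 ≤ d)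
    (h : (fun t : ℝ => p.eval t - c * t ^ d) =O[nhds 0] fun t : ℝ => t ^ (d+1)) (t : ℕ → ℝ)
    (h0 : Tendsto t atTop (nhds 0)) (hne : ∀ k, t k ≠ 0) (x : ℕ → F)
    (hx : ∀ k y, ‖x k - t k • e‖ ^ 2 + G (x k) ^ 2 ≤ ‖y - t k • e‖ ^ 2 + G y ^ 2)
    (ht : ∀ k, inner ℝ (x k) e = t (k+1)) :
    Tendsto (fun k => (t k - t (k+1)) / t k ^ (2*d-2+1)) atTop (nhds (d * c ^ 2)) := by
  obtain ⟨P1, P2⟩ := aux_poly p c d hd h t h0 hne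
  have hGd : Differentiable ℝ G := hG.differentiable (by norm_num)
  have hrec : ∀ k, t k - t (k+1) = G (x k) * fderiv ℝ G (x k) e := fun k => by
    have := aux_crit G hGd (t k • e) (x k) e (hx k)
    rw [inner_sub_left, ht, real_inner_smul_left, real_inner_self_eq_norm_sq, he] at this
    linarith
  have hdist : ∀ k, ‖x k - t k • e‖ ≤ p.eval (t k) := fun k => by
    have := hx k (t k • e)
    rw [hp] at this
    have h2 : 0 ≤ p.eval (t k) := by rw [← hp]; exact hpos _
    simp at this
    exact abs_le_of_sq_le_sq' (by nlinarith [sq_nonneg (G (x k))]) h2 |>.2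
  have hte : Tendsto (fun k => t k • e) atTop (nhds 0) := by simpa using h0.smul_const e
  have hpO : (fun k => p.eval (t k)) =O[atTop] fun k => t k ^ d := by
    refine Asymptotics.isBigO_of_div_tendsto_nhds (Eventually.of_forall fun k hk => ?_) c P1
    exact absurd hk (pow_ne_zero _ (hne k))
  have hdO : (fun k => x k - t k • e) =O[atTop] fun k => t k ^ d :=
    (Asymptotics.IsBigO.of_bound 1 (Eventually.of_forall fun k => by
      rw [one_mul]; exact (hdist k).trans (Real.le_norm_self _))).trans hpO
  have htd : Tendsto (fun k => t k ^ d) atTop (nhds 0) := by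
    simpa [show d ≠ 0 by omega] using h0.pow d
  have hx0 : Tendsto x atTop (nhds 0) := by
    have := (hdO.trans_tendsto htd).add hte
    simpa using this
  have hpair : Tendsto (fun k => (x k, t k • e)) atTop (nhds ((0:F), (0:F))) := hx0.prodMk_nhds hte
  have hf0 : fderiv ℝ G 0 = 0 := by
    have : IsLocalMin G 0 := Eventually.of_forall fun y => by rw [hG0]; exact hpos y
    exact this.fderiv_eq_zero
  have s1 : HasStrictFDerivAt G (0 : F →L[ℝ] ℝ) 0 := by
    rw [← hf0]; exact hG.contDiffAt.hasStrictFDerivAt (by norm_num)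
  have s2 : (fun k => G (x k) - G (t k • e)) =o[atTop] fun k => t k ^ d := by
    have := (s1.isLittleO.comp_tendsto hpair)
    refine (Asymptotics.IsLittleO.trans_isBigO ?_ hdO)
    simpa [Function.comp_def] using this
  have hGx : Tendsto (fun k => G (x k) / t k ^ d) atTop (nhds c) := by
    have := s2.tendsto_div_nhds_zero.add P1
    rw [zero_add] at this
    refine this.congr fun k => ?_
    rw [hp]; ring
  have hfG : ContDiff ℝ 1 (fderiv ℝ G) := hG.fderiv_right (by norm_num)
  have s3 : HasStrictFDerivAt (fderiv ℝ G) _ 0 := hfG.contDiffAt.hasStrictFDerivAt (by norm_num)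
  have s4 : (fun k => fderiv ℝ G (x k) - fderiv ℝ G (t k • e)) =O[atTop] fun k => t k ^ d :=
    (s3.isBigO_sub.comp_tendsto hpair).trans hdO
  have s5 : (fun k => fderiv ℝ G (x k) e - fderiv ℝ G (t k • e) e) =O[atTop] fun k => t k ^ d :=
    (Asymptotics.IsBigO.of_bound 1 (Eventually.of_forall fun k => by
      have := (fderiv ℝ G (x k) - fderiv ℝ G (t k • e)).le_opNorm e
      rw [he] at this
      simpa using this)).trans s4
  have s6 : (fun k => fderiv ℝ G (x k) e - fderiv ℝ G (t k • e) e) =o[atTop] fun k => t k ^ (d-1) := by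
    refine s5.trans_isLittleO ?_
    exact (Asymptotics.isLittleO_pow_pow (show d - 1 < d by omega)).comp_tendsto h0
  have hder : ∀ s : ℝ, fderiv ℝ G (s • e) e = p.derivative.eval s := fun s => by
    have h1 : HasDerivAt (fun s : ℝ => G (s • e)) (fderiv ℝ G (s • e) e) s := by
      have := (hGd (s • e)).hasFDerivAt.comp_hasDerivAt s ((hasDerivAt_id s).smul_const e)
      rw [one_smul] at this
      exact this
    have h2 := p.hasDerivAt s
    simp only [hp] at h1
    exact h1.unique h2
  have hDx : Tendsto (fun k => fderiv ℝ G (x k) e / t k ^ (d-1)) atTop (nhds (d * c)) := by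
    have := s6.tendsto_div_nhds_zero.add P2
    rw [zero_add] at this
    refine this.congr fun k => ?_
    rw [hder]; ring
  have := hGx.mul hDx
  rw [show (d:ℝ) * c ^ 2 = c * (d * c) by ring]
  refine this.congr fun k => ?_
  rw [hrec, div_mul_div_comm, ← pow_add]
  congr 2; omega

lemma aux_proj {E : Type*} [NormedAddCommGroup E] [InnerProductSpace ℝ E] (K : Set E) (hK : Convex ℝ K)
    (p w : E) (h : IsMetricProj K p w) : ∀ s ∈ K, inner ℝ (p - w) (s - w) ≤ 0 := by
  refine (norm_eq_iInf_iff_real_inner_le_zero hK h.1).1 ?_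
  have : Nonempty K := ⟨⟨w, h.1⟩⟩
  refine le_antisymm (le_ciInf fun s => ?_) ?_
  · rw [norm_sub_rev p w, norm_sub_rev p s]; exact h.2 s s.2
  · exact ciInf_le (f := fun s : K => ‖p - s‖) ⟨0, by rintro _ ⟨s, rfl⟩; exact norm_nonneg _⟩ ⟨w, h.1⟩

lemma aux_fejer {E : Type*} [NormedAddCommGroup E] [InnerProductSpace ℝ E] (K : Set E) (hK : Convex ℝ K)
    (h0 : (0:E) ∈ K) (p w : E) (h : IsMetricProj K p w) : ‖w‖ ^ 2 + ‖p - w‖ ^ 2 ≤ ‖p‖ ^ 2 := by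
  have := aux_proj K hK p w h 0 h0
  have e : ‖p‖ ^ 2 = ‖(p - w) + w‖ ^ 2 := by simp
  rw [e, norm_add_sq_real]
  simp at this
  linarith

lemma aux_conv {E : Type*} [NormedAddCommGroup E] [InnerProductSpace ℝ E] [FiniteDimensional ℝ E]
    (A B : Set E) (hA : Convex ℝ A) (hB : Convex ℝ B) (cA : IsClosed A) (cB : IsClosed B)
    (hAB : A ∩ B = {0}) (u : ℕ → E)
    (hstep : ∀ k, ∃ w, IsMetricProj A (u k) w ∧ IsMetricProj B w (u (k + 1))) :
    Tendsto u atTop (nhds 0) := by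
  choose w hw hu using hstep
  have h0 : (0:E) ∈ A ∩ B := by rw [hAB]; rfl
  have f1 := fun k => aux_fejer A hA h0.1 _ _ (hw k)
  have f2 := fun k => aux_fejer B hB h0.2 _ _ (hu k)
  have hanti : Antitone fun k => ‖u k‖ ^ 2 := antitone_nat_of_succ_le fun k => by
    have := f1 k; have := f2 k
    nlinarith [sq_nonneg ‖u k - w k‖, sq_nonneg ‖w k - u (k+1)‖]
  have hbd : ∀ k, ‖u k‖ ^ 2 ≤ ‖u 0‖ ^ 2 := fun k => hanti (Nat.zero_le k)
  have hlim := tendsto_atTop_ciInf hanti ⟨0, by rintro _ ⟨k, rfl⟩; positivity⟩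
  set r := ⨅ k, ‖u k‖ ^ 2
  have hdiff : Tendsto (fun k => ‖u k‖ ^ 2 - ‖u (k+1)‖ ^ 2) atTop (nhds 0) := by
    simpa using hlim.sub ((tendsto_add_atTop_iff_nat 1).2 hlim)
  have aux : ∀ v : ℕ → E, (∀ k, ‖v k‖ ^ 2 ≤ ‖u k‖ ^ 2 - ‖u (k+1)‖ ^ 2) → Tendsto v atTop (nhds 0) := by
    intro v hv
    have h1 : Tendsto (fun k => ‖v k‖ ^ 2) atTop (nhds 0) :=
      squeeze_zero (fun k => by positivity) hv hdiff
    have h2 := h1.sqrt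
    simp only [Real.sqrt_zero, Real.sqrt_sq (norm_nonneg _)] at h2
    exact tendsto_zero_iff_norm_tendsto_zero.2 h2
  have d1 : Tendsto (fun k => u k - w k) atTop (nhds 0) := aux _ fun k => by
    have := f1 k; have := f2 k; nlinarith [sq_nonneg ‖w k - u (k+1)‖]
  have d2 : Tendsto (fun k => w k - u (k+1)) atTop (nhds 0) := aux _ fun k => by
    have := f1 k; have := f2 k; nlinarith [sq_nonneg ‖u k - w k‖]
  obtain ⟨z, -, φ, hφ, hz⟩ := (isCompact_closedBall (0:E) ‖u 0‖).tendsto_subseq (x := u) fun k => by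
    simpa using abs_le_of_sq_le_sq' (hbd k) (norm_nonneg _) |>.2
  have z1 : Tendsto (fun k => w (φ k)) atTop (nhds z) := by
    have := hz.sub (d1.comp hφ.tendsto_atTop)
    simpa [Function.comp_def] using this
  have z2 : Tendsto (fun k => u (φ k + 1)) atTop (nhds z) := by
    have := z1.sub (d2.comp hφ.tendsto_atTop)
    simpa [Function.comp_def] using this
  have zA : z ∈ A := cA.mem_of_tendsto z1 (Eventually.of_forall fun k => (hw _).1)
  have zB : z ∈ B := cB.mem_of_tendsto z2 (Eventually.of_forall fun k => (hu _).1)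
  have hz0 : z ∈ A ∩ B := ⟨zA, zB⟩
  rw [hAB] at hz0
  have hz0' : z = 0 := hz0
  subst hz0'
  have e1 : Tendsto (fun k => ‖u (φ k)‖ ^ 2) atTop (nhds 0) := by
    simpa [Function.comp_def] using hz.norm.pow 2
  have e2 := tendsto_nhds_unique e1 (hlim.comp hφ.tendsto_atTop)
  rw [← e2] at hlim
  have h2 := hlim.sqrt
  simp only [Real.sqrt_zero, Real.sqrt_sq (norm_nonneg _)] at h2
  exact tendsto_zero_iff_norm_tendsto_zero.2 h2

lemma aux_contDiff (n : ℕ) (g : MvPolynomial (Fin n) ℝ) :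
    ContDiff ℝ 2 (fun x : EuclideanSpace ℝ (Fin n) => MvPolynomial.eval (fun i => x i) g) := by
  induction g using MvPolynomial.induction_on with
  | C a => simpa using contDiff_const
  | add p q hp hq => simpa using hp.add hq
  | mul_X p i hp =>
    simp only [map_mul, MvPolynomial.eval_X]
    exact hp.mul (by fun_prop)

lemma aux_univ (n : ℕ) (g : MvPolynomial (Fin n) ℝ) (c : Fin n → ℝ) :
    ∃ p : Polynomial ℝ, ∀ t : ℝ, p.eval t = MvPolynomial.eval (fun i => t * c i) g := by
  induction g using MvPolynomial.induction_on with
  | C a => exact ⟨Polynomial.C a, by simp⟩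
  | add p q hp hq =>
    obtain ⟨p', hp⟩ := hp
    obtain ⟨q', hq⟩ := hq
    exact ⟨p' + q', by simp [hp, hq]⟩
  | mul_X p i hp =>
    obtain ⟨p', hp⟩ := hp
    exact ⟨p' * (Polynomial.X * Polynomial.C (c i)), fun t => by
      simp only [Polynomial.eval_mul, hp, Polynomial.eval_X, Polynomial.eval_C, map_mul, MvPolynomial.eval_X]⟩

/-- Horizontal part of a point of `ℝ^{n+1}`. -/
def hpart {n : ℕ} (v : EuclideanSpace ℝ (Fin (n+1))) : EuclideanSpace ℝ (Fin n) :=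
  WithLp.toLp 2 fun i => v i.castSucc

lemma hpart_apply {n : ℕ} (v : EuclideanSpace ℝ (Fin (n+1))) (i : Fin n) : hpart v i = v i.castSucc := rfl

lemma hpart_sub {n : ℕ} (v w : EuclideanSpace ℝ (Fin (n+1))) : hpart (v - w) = hpart v - hpart w := by
  ext i; simp [hpart_apply]

lemma hpart_smul {n : ℕ} (t : ℝ) (w : EuclideanSpace ℝ (Fin (n+1))) : hpart (t • w) = t • hpart w := by
  ext i; simp [hpart_apply]

lemma hpart_inner {n : ℕ} (v w : EuclideanSpace ℝ (Fin (n+1))) :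
    inner ℝ v w = inner ℝ (hpart v) (hpart w) + v (Fin.last n) * w (Fin.last n) := by
  simp [PiLp.inner_apply, Fin.sum_univ_castSucc, hpart_apply, mul_comm]

lemma hpart_norm {n : ℕ} (v : EuclideanSpace ℝ (Fin (n+1))) :
    ‖v‖ ^ 2 = ‖hpart v‖ ^ 2 + v (Fin.last n) ^ 2 := by
  rw [← real_inner_self_eq_norm_sq, hpart_inner, real_inner_self_eq_norm_sq, sq (v _)]

theorem stmt8 (n : ℕ) (g : MvPolynomial (Fin n) ℝ)
    (hconv : ConvexOn ℝ Set.univ (fun x : Fin n → ℝ => MvPolynomial.eval x g))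
    (hg0 : MvPolynomial.eval (fun _ : Fin n => (0 : ℝ)) g = 0)
    (hgpos : ∀ x : Fin n → ℝ, x ≠ 0 → 0 < MvPolynomial.eval x g)
    (A : Set (EuclideanSpace ℝ (Fin (n + 1))))
    (hA : A = {u | MvPolynomial.eval (fun i : Fin n => u i.castSucc) g ≤ u (Fin.last n)})
    (a : EuclideanSpace ℝ (Fin n)) (ha : a ≠ 0)
    (B : Set (EuclideanSpace ℝ (Fin (n + 1))))
    (hB : B = Set.range (fun t : ℝ =>
      t • (WithLp.equiv 2 (Fin (n + 1) → ℝ)).symm (Fin.snoc (fun i => a i) 0)))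
    (c₀ : ℝ) (hc₀ : 0 < c₀) (d : ℕ) (hd : 2 ≤ d)
    (hlow : (fun t : ℝ =>
        MvPolynomial.eval (fun i : Fin n => t / ‖a‖ * a i) g - c₀ * t ^ d)
      =O[nhds 0] fun t : ℝ => t ^ (d + 1))
    (u : ℕ → EuclideanSpace ℝ (Fin (n + 1)))
    (hstep : ∀ k, ∃ w, IsMetricProj A (u k) w ∧ IsMetricProj B w (u (k + 1)))
    (hne : ∀ k, u k ≠ 0) :
    Tendsto u atTop (nhds 0) ∧
    Tendsto (fun k : ℕ =>
        ((2 * (d : ℝ) - 2) * d * c₀ ^ 2) ^ (1 / (2 * (d : ℝ) - 2)) *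
          (k : ℝ) ^ (1 / (2 * (d : ℝ) - 2)) * ‖u k‖)
      atTop (nhds 1) ∧
    ∃ C₁ C₂ : ℝ, ∃ K : ℕ, 0 < C₁ ∧ C₁ ≤ C₂ ∧ ∀ k ≥ K,
      C₁ * (k : ℝ) ^ (-(1 / (2 * (d : ℝ) - 2))) ≤ ‖u k‖ ∧
      ‖u k‖ ≤ C₂ * (k : ℝ) ^ (-(1 / (2 * (d : ℝ) - 2))) := by
  classical
  set b : EuclideanSpace ℝ (Fin (n + 1)) :=
    (WithLp.equiv 2 (Fin (n + 1) → ℝ)).symm (Fin.snoc (fun i => a i) 0) with hb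
  have hbl : b (Fin.last n) = 0 := by simp [hb]
  have hbh : hpart b = a := by ext i; simp [hb, hpart_apply]
  set G : EuclideanSpace ℝ (Fin n) → ℝ := fun x => MvPolynomial.eval (fun i => x i) g with hGdef
  have hG := aux_contDiff n g
  have hG0 : G 0 = 0 := by simpa [hGdef] using hg0
  have hGp : ∀ x, x ≠ 0 → 0 < G x := fun x hx => hgpos _ fun h => hx (by
    ext i; exact congrFun h i)
  have hGn : ∀ x, 0 ≤ G x := fun x => by
    by_cases h : x = 0
    · rw [h, hG0]
    · exact (hGp x h).le
  have hA' : ∀ v, v ∈ A ↔ G (hpart v) ≤ v (Fin.last n) := fun v => by rw [hA]; rfl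
  have hB' : ∀ v, v ∈ B ↔ ∃ τ : ℝ, τ • b = v := fun v => by rw [hB]; rfl
  have cvA : Convex ℝ A := by
    intro v hv w hw α β hα hβ hαβ
    rw [hA'] at *
    have := hconv.2 (Set.mem_univ (fun i : Fin n => v i.castSucc))
      (Set.mem_univ (fun i : Fin n => w i.castSucc)) hα hβ hαβ
    refine le_trans this ?_
    simp only [smul_eq_mul, PiLp.add_apply, PiLp.smul_apply]
    exact add_le_add (mul_le_mul_of_nonneg_left hv hα) (mul_le_mul_of_nonneg_left hw hβ)
  have clA : IsClosed A := by
    have : A = {v | G (hpart v) ≤ v (Fin.last n)} := Set.ext hA'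
    rw [this]
    refine isClosed_le (hG.continuous.comp ?_) (by fun_prop)
    unfold hpart; fun_prop
  have hBs : B = (Submodule.span ℝ {b} : Submodule ℝ _) := by
    ext v; rw [hB']; simp [Submodule.mem_span_singleton]
  have cvB : Convex ℝ B := by rw [hBs]; exact Submodule.convex _
  have clB : IsClosed B := by rw [hBs]; exact Submodule.closed_of_finiteDimensional _
  have hAB : A ∩ B = {0} := by
    ext v
    simp only [Set.mem_inter_iff, Set.mem_singleton_iff, hA', hB']
    constructor
    · rintro ⟨h1, τ, rfl⟩
      rw [hpart_smul, hbh] at h1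
      simp only [PiLp.smul_apply, hbl, smul_zero] at h1
      by_cases h : τ = 0
      · simp [h]
      · exact absurd (hGp _ (smul_ne_zero h ha)) (not_lt.2 h1)
    · rintro rfl
      refine ⟨?_, 0, by simp⟩
      have : hpart (0 : EuclideanSpace ℝ (Fin (n+1))) = 0 := by ext i; simp [hpart_apply]
      rw [this, hG0]; simp
  have hlim : Tendsto u atTop (nhds 0) := aux_conv A B cvA cvB clA clB hAB u hstep
  have hna : 0 < ‖a‖ := norm_pos_iff.2 ha
  set e : EuclideanSpace ℝ (Fin n) := ‖a‖⁻¹ • a with he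
  have hen : ‖e‖ = 1 := by rw [he, norm_smul, norm_inv, norm_norm]; field_simp
  obtain ⟨p, hp⟩ := aux_univ n g (fun i => ‖a‖⁻¹ * a i)
  have hp1 : ∀ t : ℝ, G (t • e) = p.eval t := fun t => by
    rw [hp]; simp [hGdef, he]
  have hp2 : (fun t : ℝ => p.eval t - c₀ * t ^ d) =O[nhds 0] fun t : ℝ => t ^ (d+1) := by
    refine hlow.congr_left fun t => ?_
    rw [hp]; simp only [div_eq_mul_inv, mul_assoc]
  choose w hw hu using hstep
  set t : ℕ → ℝ := fun k => inner ℝ (hpart (u (k+1))) e with ht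
  have hue : ∀ k, hpart (u (k+1)) = t k • e ∧ u (k+1) (Fin.last n) = 0 := fun k => by
    obtain ⟨τ, hτ⟩ := (hB' _).1 (hu k).1
    have h1 : hpart (u (k+1)) = (τ * ‖a‖) • e := by
      rw [← hτ, hpart_smul, hbh, he, smul_smul, mul_assoc, mul_inv_cancel₀ hna.ne', mul_one]
    constructor
    · rw [ht]; simp only
      rw [h1, real_inner_smul_left, real_inner_self_eq_norm_sq, hen]; simp
    · rw [← hτ]; simp [hbl]
  have hun : ∀ k, ‖u (k+1)‖ = |t k| := fun k => by
    have := hpart_norm (u (k+1))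
    rw [(hue k).1, (hue k).2, norm_smul, hen] at this
    simp only [mul_one, ne_eq, OfNat.ofNat_ne_zero, not_false_eq_true, zero_pow, add_zero] at this
    rw [Real.norm_eq_abs] at this
    exact (pow_left_inj₀ (norm_nonneg _) (abs_nonneg _) two_ne_zero).1 this
  have hlim1 : Tendsto (fun k => ‖u (k+1)‖) atTop (nhds 0) := by
    simpa using ((tendsto_add_atTop_iff_nat 1).2 hlim).norm
  have ht0 : Tendsto t atTop (nhds 0) := by
    simp only [hun] at hlim1
    exact tendsto_zero_iff_abs_tendsto_zero _ |>.2 hlim1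
  have htne : ∀ k, t k ≠ 0 := fun k h => by
    have := hun k
    rw [h, abs_zero, norm_eq_zero] at this
    exact hne _ this
  have hcore := aux_core G hG hGn hG0 e hen p hp1 c₀ d hd hp2 t ht0 htne (fun k => hpart (w (k+1)))
    (by
      intro k y
      set Y : EuclideanSpace ℝ (Fin (n+1)) := WithLp.toLp 2 (Fin.snoc (fun i => y i) (G y)) with hY
      have hYh : hpart Y = y := by ext i; simp [hY, hpart_apply]
      have hYl : Y (Fin.last n) = G y := by simp [hY]
      have hYA : Y ∈ A := by rw [hA', hYh, hYl]
      have h1 := pow_le_pow_left₀ (norm_nonneg _) ((hw (k+1)).2 Y hYA) 2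
      rw [hpart_norm, hpart_norm, hpart_sub, hpart_sub, hYh, (hue k).1] at h1
      simp only [PiLp.sub_apply, (hue k).2, hYl, sub_zero] at h1
      have h2 := (hA' _).1 (hw (k+1)).1
      have h3 := pow_le_pow_left₀ (hGn _) h2 2
      linarith)
    (by
      intro k
      have hm := (hu (k+1)).1
      obtain ⟨τ, hτ⟩ := (hB' _).1 hm
      have h1 := aux_proj B cvB _ _ (hu (k+1)) (u (k+1+1) + b) ((hB' _).2 ⟨τ + 1, by rw [add_smul, one_smul, hτ]⟩)
      have h2 := aux_proj B cvB _ _ (hu (k+1)) (u (k+1+1) - b) ((hB' _).2 ⟨τ - 1, by rw [sub_smul, one_smul, hτ]⟩)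
      rw [add_sub_cancel_left] at h1
      rw [sub_sub_cancel_left, inner_neg_right] at h2
      have h3 : inner ℝ (w (k+1) - u (k+1+1)) b = 0 := by linarith
      rw [hpart_inner, hbh, hbl, hpart_sub, mul_zero, add_zero, inner_sub_left] at h3
      rw [ht, he]; simp only
      rw [real_inner_smul_right, real_inner_smul_right]
      congr 1; linarith)
  have hinc := aux_incr t (2*d-2) (by omega) _ ht0 htne hcore
  have hev : Even (2*d-2) := ⟨d-1, by omega⟩
  have hdR : (2:ℝ) ≤ d := by exact_mod_cast hd
  have hcast : ((2*d-2 : ℕ) : ℝ) = 2 * (d:ℝ) - 2 := by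
    rw [Nat.cast_sub (by omega)]; push_cast; ring
  have hLe : (d:ℝ) * c₀ ^ 2 * ((2*d-2 : ℕ) : ℝ) = (2 * (d : ℝ) - 2) * d * c₀ ^ 2 := by rw [hcast]; ring
  rw [hLe] at hinc
  have hL : 0 < (2 * (d : ℝ) - 2) * d * c₀ ^ 2 := by
    have : 0 < 2 * (d : ℝ) - 2 := by linarith
    positivity
  have hinc2 : Tendsto (fun k => (‖u (k+1)‖ ^ (2*d-2))⁻¹ - (‖u k‖ ^ (2*d-2))⁻¹) atTop
      (nhds ((2 * (d : ℝ) - 2) * d * c₀ ^ 2)) := by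
    rw [← tendsto_add_atTop_iff_nat 1]
    refine hinc.congr fun k => ?_
    rw [hun, hun, hev.pow_abs, hev.pow_abs]
  have hfin := aux_final (fun k => ‖u k‖) (2*d-2) (by omega) _ hL (fun k => norm_pos_iff.2 (hne k)) hinc2
  rw [hcast] at hfin
  exact ⟨hlim, hfin, aux_theta _ _ _ (Real.rpow_pos_of_pos hL _) hfin⟩
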